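/- Suppose F = E_ξ[F(·;ξ)] has nonempty optimal set X*, there is a subgradient selection at some x* ∈ X* with E_ξ[g_F(x*;ξ)] = 0 and E_ξ[‖g_F(x*;ξ)‖²] ≤ S*_F, and F satisfies the weak linear regularity property with constants σ_{F,μ} (nonincreasing in μ) and β. Let {μ_k}_{k≥0} be a nonincreasing positive stepsize sequence with μ_k σ_{F,μ_0} ≤ 1 for all k, and let {x^k} be generated by the SPP algorithm. Then for all k ≥ 0: E[ dist_{X*}²(x^{k+1}) ] ≤ [ ∏_{i=0}^{k} (1 − μ_i σ_{F,μ_0}) ]·dist_{X*}²(x^0) + (S*_F + 2β)·∑_{i=0}^{k} [ ∏_{j=i+1}^{k} (1 − μ_j σ_{F,μ_0}) ]·μ_i². -/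

import Mathlib

/- Statement 9: Theorem `th_recurence`.
Under weak linear regularity (constants `σ_{F,μ}` nonincreasing in `μ`, `β ≥ 0`) and a
zero-mean subgradient selection at an optimal point with second moment `≤ S*_F`, the SPP
iterates `x^{k+1} = z_{μ_k}(x^k;ξ_k)` (i.i.d. samples `ξ_k ∼ P`, nonincreasing positive
stepsizes with `μ_k σ_{F,μ_0} ≤ 1`) satisfy, for all `k ≥ 0`,
`E[dist²_{X*}(x^{k+1})] ≤ (∏_{i=0}^k (1−μ_i σ_{F,μ_0}))·dist²_{X*}(x^0)
  + (S*_F + 2β)·∑_{i=0}^k (∏_{j=i+1}^k (1−μ_j σ_{F,μ_0}))·μ_i²`.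
The iterate `x^k` is a function of the first `k` samples, and the expectation is taken
with respect to the `k`-fold product measure. -/

open MeasureTheory Metric Set
open scoped RealInnerProductSpace

noncomputable section

/-!
The Moreau objective is `μ⁻¹`-strongly convex, so it grows quadratically away from the proximal
point. For `z ∈ X*` this reads `‖x⁺ - z‖² ≤ ‖x - z‖² + 2μ (F(z;ξ) - F_μ(x;ξ))`; averaging over `ξ`
and taking the infimum over `z` gives `E dist²(x⁺) ≤ dist²(x) + 2μ (F* - F_μ(x))`. Young's
inequality applied to the zero-mean subgradients bounds `F_μ*` below by `F* - μ S*_F / 2`, and weak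
linear regularity then turns the estimate into the affine recurrence
`E dist²(x⁺) ≤ (1 - μ σ) dist²(x) + (S*_F + 2β) μ²`, which is unrolled by the discrete Grönwall
inequality. Since `x^k` need not be measurable in the samples, expectations of squared distances are
taken as lower Lebesgue integrals, for which one inequality of Tonelli's theorem survives.
-/

section Prox

variable {E : Type*} [NormedAddCommGroup E]

/-- The function `y ↦ f y + ‖y - x‖² / (2μ)` whose minimum value is the Moreau envelope of `f`
at `x`. -/
def proxObjective (f : E → ℝ) (μ : ℝ) (x y : E) : ℝ :=
  f y + ‖y - x‖ ^ 2 / (2 * μ)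

/-- `p` is a proximal point `prox_{μ f}(x)`, where `s` is the effective domain of `f`. -/
def IsProxPoint (s : Set E) (f : E → ℝ) (μ : ℝ) (x p : E) : Prop :=
  p ∈ s ∧ IsMinOn (proxObjective f μ x) s p

theorem add_sq_norm_sub_le_of_strongConvexOn_of_isMinOn [NormedSpace ℝ E] {s : Set E} {m : ℝ}
    {f : E → ℝ} {p z : E} (hf : StrongConvexOn s m f) (hmin : IsMinOn f s p) (hp : p ∈ s)
    (hz : z ∈ s) : f p + m / 2 * ‖p - z‖ ^ 2 ≤ f z := by
  have segment_bound : ∀ t ∈ Ioo (0 : ℝ) 1, f p + (1 - t) * (m / 2 * ‖p - z‖ ^ 2) ≤ f z := by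
    rintro t ⟨ht0, ht1⟩
    have hconv := hf.2 hp hz (sub_nonneg.2 ht1.le) ht0.le (sub_add_cancel 1 t)
    have hle := isMinOn_iff.1 hmin _
      (hf.1 hp hz (sub_nonneg.2 ht1.le) ht0.le (sub_add_cancel 1 t))
    simp only [smul_eq_mul] at hconv
    refine le_of_mul_le_mul_left ?_ ht0
    linarith
  have hlim : Filter.Tendsto (fun t : ℝ => f p + (1 - t) * (m / 2 * ‖p - z‖ ^ 2))
      (nhdsWithin 0 (Ioi 0)) (nhds (f p + (1 - 0) * (m / 2 * ‖p - z‖ ^ 2))) :=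
    (Continuous.tendsto (by fun_prop) 0).mono_left nhdsWithin_le_nhds
  rw [sub_zero, one_mul] at hlim
  exact le_of_tendsto hlim
    (Filter.mem_of_superset (Ioo_mem_nhdsGT one_pos) segment_bound)

variable [InnerProductSpace ℝ E] {s : Set E} {f : E → ℝ}

theorem strongConvexOn_proxObjective (hf : ConvexOn ℝ s f) (μ : ℝ) (x : E) :
    StrongConvexOn s μ⁻¹ (proxObjective f μ x) := by
  have affine_remainder : (fun y => proxObjective f μ x y - μ⁻¹ / 2 * ‖y‖ ^ 2)
      = fun y => f y + (-μ⁻¹ • innerSL ℝ x).toLinearMap y + μ⁻¹ / 2 * ‖x‖ ^ 2 := by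
    funext y
    simp only [proxObjective, norm_sub_sq_real, real_inner_comm x y, ContinuousLinearMap.coe_coe,
      smul_apply, innerSL_apply_apply, smul_eq_mul]
    ring
  rw [strongConvexOn_iff_convex, affine_remainder]
  exact (hf.add (LinearMap.convexOn _ hf.1)).add_const _

theorem IsProxPoint.dist_sq_le {μ : ℝ} {x p z : E} (h : IsProxPoint s f μ x p)
    (hf : ConvexOn ℝ s f) (hμ : 0 < μ) (hz : z ∈ s) :
    dist p z ^ 2 ≤ dist x z ^ 2 + 2 * μ * (f z - proxObjective f μ x p) := by
  have growth := add_sq_norm_sub_le_of_strongConvexOn_of_isMinOn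
    (strongConvexOn_proxObjective hf μ x) h.2 h.1 hz
  have hz_obj : proxObjective f μ x z = f z + dist x z ^ 2 / (2 * μ) := by
    rw [proxObjective, dist_comm, dist_eq_norm]
  rw [hz_obj, ← dist_eq_norm] at growth
  have scaled := mul_le_mul_of_nonneg_left growth (by positivity : 0 ≤ 2 * μ)
  field_simp at scaled
  linarith

theorem subgradient_bound_le_proxObjective {μ : ℝ} (hμ : 0 < μ) {g z y : E} (x : E)
    (hg : f z + ⟪g, y - z⟫ ≤ f y) :
    f z + ⟪g, x - z⟫ - μ / 2 * ‖g‖ ^ 2 ≤ proxObjective f μ x y := by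
  have complete_square : ‖μ • g + (y - x)‖ ^ 2 / (2 * μ)
      = μ / 2 * ‖g‖ ^ 2 + ⟪g, y - x⟫ + ‖y - x‖ ^ 2 / (2 * μ) := by
    rw [norm_add_sq_real, norm_smul, real_inner_smul_left, mul_pow, Real.norm_eq_abs, sq_abs]
    field_simp
  have hsplit : ⟪g, y - z⟫ = ⟪g, y - x⟫ + ⟪g, x - z⟫ := by
    rw [← inner_add_right, sub_add_sub_cancel]
  have hnonneg : 0 ≤ ‖μ • g + (y - x)‖ ^ 2 / (2 * μ) := by positivity
  rw [proxObjective]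
  linarith

end Prox

section Regularity

theorem le_apply_infDist {α β : Type*} [PseudoMetricSpace α] [TopologicalSpace β] [Preorder β]
    [ClosedIciTopology β] {X : Set α} (hX : X.Nonempty) {φ : ℝ → β} (hφ : Continuous φ) {x : α}
    {b : β} (h : ∀ z ∈ X, b ≤ φ (dist x z)) : b ≤ φ (infDist x X) := by
  have closure_subset : closure ((dist x ·) '' X) ⊆ φ ⁻¹' Ici b :=
    closure_minimal (image_subset_iff.2 h) (isClosed_Ici.preimage hφ)
  exact closure_subset ((isGLB_infDist hX).mem_closure (hX.image _))

/-- Weak linear regularity of an envelope `V` with modulus `σ` and additive slack `c`; the paper's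
property at parameter `μ` is the case `V = F_μ`, `c = μ β`. The optimal value `V*` is an infimum,
not required to be attained. -/
def IsWeaklyLinearlyRegular {E : Type*} [PseudoMetricSpace E] (V : E → ℝ)
    (X : Set E) (σ c : ℝ) : Prop :=
  ∃ Vstar, IsGLB (range V) Vstar ∧ ∀ x, σ / 2 * infDist x X ^ 2 ≤ V x - Vstar + c

theorem IsWeaklyLinearlyRegular.mono {E : Type*} [PseudoMetricSpace E] {V : E → ℝ}
    {X : Set E} {σ τ c : ℝ} (h : IsWeaklyLinearlyRegular V X σ c)
    (hτσ : τ ≤ σ) : IsWeaklyLinearlyRegular V X τ c := by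
  obtain ⟨Vstar, hV, hreg⟩ := h
  exact ⟨Vstar, hV, fun x => le_trans (by gcongr) (hreg x)⟩

end Regularity

section Expectation

variable {E Ω : Type*} [MeasurableSpace Ω]

/-- Points at which the expected objective `E_ξ[F(x;ξ)]` is meaningful: `x` lies in the effective
domain `D ξ` of every component and the components are integrable at `x`. -/
def expectedDomain (P : Measure Ω) (D : Ω → Set E) (F : Ω → E → ℝ) : Set E :=
  {x | (∀ ξ, x ∈ D ξ) ∧ Integrable (fun ξ => F ξ x) P}

/-- The optimal set `X*` of the expected objective `E_ξ[F(·;ξ)]`. -/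
def expectedMinimizers (P : Measure Ω) (D : Ω → Set E) (F : Ω → E → ℝ) : Set E :=
  {x ∈ expectedDomain P D F | IsMinOn (fun y => ∫ ξ, F ξ y ∂P) (expectedDomain P D F) x}

theorem eq_expectedMinimizers {P : Measure Ω} {D : Ω → Set E} {F : Ω → E → ℝ} {X : Set E}
    {Fstar : ℝ} (hne : X.Nonempty)
    (hX : ∀ x, x ∈ X ↔
      ((∀ ξ, x ∈ D ξ) ∧ Integrable (fun ξ => F ξ x) P ∧ ∫ ξ, F ξ x ∂P = Fstar))
    (hmin : ∀ x, (∀ ξ, x ∈ D ξ) → Integrable (fun ξ => F ξ x) P → Fstar ≤ ∫ ξ, F ξ x ∂P) :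
    X = expectedMinimizers P D F := by
  ext x
  refine (hX x).trans ⟨fun ⟨hD, hint, hval⟩ => ?_, fun ⟨⟨hD, hint⟩, hx⟩ => ?_⟩
  · exact ⟨⟨hD, hint⟩, isMinOn_iff.2 fun y hy => hval.trans_le (hmin y hy.1 hy.2)⟩
  · obtain ⟨z, hz⟩ := hne
    obtain ⟨hzD, hzint, hzval⟩ := (hX z).1 hz
    have hle : ∫ ξ, F ξ x ∂P ≤ ∫ ξ, F ξ z ∂P := isMinOn_iff.1 hx z ⟨hzD, hzint⟩
    exact ⟨hD, hint, (hle.trans_eq hzval).antisymm (hmin x hD hint)⟩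

variable [NormedAddCommGroup E]

/-- The expected Moreau envelope `F_μ(x)`, where `T x ξ` stands for the proximal point
`z_μ(x;ξ)`. -/
def expectedEnvelope (P : Measure Ω) (F : Ω → E → ℝ) (T : E → Ω → E) (μ : ℝ) (x : E) : ℝ :=
  ∫ ξ, proxObjective (F ξ) μ x (T x ξ) ∂P

/-- `g` selects subgradients `g ξ ∈ ∂F(x;ξ)` with zero mean and finite second moment. -/
structure IsZeroMeanSubgradient [InnerProductSpace ℝ E] (P : Measure Ω) (D : Ω → Set E)
    (F : Ω → E → ℝ) (x : E) (g : Ω → E) : Prop where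
  add_inner_le : ∀ ξ, ∀ y ∈ D ξ, F ξ x + ⟪g ξ, y - x⟫ ≤ F ξ y
  memLp : MemLp g 2 P
  integral_eq_zero : ∫ ξ, g ξ ∂P = 0

variable {P : Measure Ω} {D : Ω → Set E} {F : Ω → E → ℝ} {T : E → Ω → E} {μ : ℝ}

variable [InnerProductSpace ℝ E]

theorem lintegral_dist_prox_sq_le [IsProbabilityMeasure P] (hμ : 0 < μ)
    (hF : ∀ ξ, ConvexOn ℝ (D ξ) (F ξ)) {x z : E}
    (hT : ∀ ξ, IsProxPoint (D ξ) (F ξ) μ x (T x ξ))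
    (hint : Integrable (fun ξ => proxObjective (F ξ) μ x (T x ξ)) P)
    (hz : z ∈ expectedDomain P D F) :
    ∫⁻ ξ, ENNReal.ofReal (dist (T x ξ) z ^ 2) ∂P
      ≤ ENNReal.ofReal
        (dist x z ^ 2 + 2 * μ * (∫ ξ, F ξ z ∂P - expectedEnvelope P F T μ x)) := by
  set bound : Ω → ℝ :=
    fun ξ => dist x z ^ 2 + 2 * μ * (F ξ z - proxObjective (F ξ) μ x (T x ξ))
  have dist_le_bound : ∀ ξ, dist (T x ξ) z ^ 2 ≤ bound ξ :=
    fun ξ => (hT ξ).dist_sq_le (hF ξ) hμ (hz.1 ξ)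
  have gap_integrable :
      Integrable (fun ξ => 2 * μ * (F ξ z - proxObjective (F ξ) μ x (T x ξ))) P :=
    (hz.2.sub hint).const_mul _
  have integral_bound : ∫ ξ, bound ξ ∂P
      = dist x z ^ 2 + 2 * μ * (∫ ξ, F ξ z ∂P - expectedEnvelope P F T μ x) := by
    rw [integral_add (integrable_const _) gap_integrable, integral_const_mul,
      integral_sub hz.2 hint, integral_const, probReal_univ, one_smul, expectedEnvelope]
  calc ∫⁻ ξ, ENNReal.ofReal (dist (T x ξ) z ^ 2) ∂P
      ≤ ∫⁻ ξ, ENNReal.ofReal (bound ξ) ∂P :=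
        lintegral_mono fun ξ => ENNReal.ofReal_le_ofReal (dist_le_bound ξ)
    _ = ENNReal.ofReal (∫ ξ, bound ξ ∂P) :=
        (ofReal_integral_eq_lintegral_ofReal ((integrable_const _).add gap_integrable)
          (ae_of_all _ fun ξ => (sq_nonneg _).trans (dist_le_bound ξ))).symm
    _ = _ := by rw [integral_bound]

theorem lintegral_infDist_prox_sq_le [IsProbabilityMeasure P] (hμ : 0 < μ)
    (hF : ∀ ξ, ConvexOn ℝ (D ξ) (F ξ)) {x xstar : E}
    (hT : ∀ ξ, IsProxPoint (D ξ) (F ξ) μ x (T x ξ))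
    (hint : Integrable (fun ξ => proxObjective (F ξ) μ x (T x ξ)) P)
    (hxstar : xstar ∈ expectedMinimizers P D F) :
    ∫⁻ ξ, ENNReal.ofReal (infDist (T x ξ) (expectedMinimizers P D F) ^ 2) ∂P
      ≤ ENNReal.ofReal (infDist x (expectedMinimizers P D F) ^ 2
        + 2 * μ * (∫ ξ, F ξ xstar ∂P - expectedEnvelope P F T μ x)) := by
  refine le_apply_infDist ⟨xstar, hxstar⟩ (φ := fun r => ENNReal.ofReal
    (r ^ 2 + 2 * μ * (∫ ξ, F ξ xstar ∂P - expectedEnvelope P F T μ x)))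
    (ENNReal.continuous_ofReal.comp (by fun_prop)) ?_
  intro z hz
  have same_value : ∫ ξ, F ξ z ∂P = ∫ ξ, F ξ xstar ∂P :=
    (isMinOn_iff.1 hz.2 xstar hxstar.1).antisymm (isMinOn_iff.1 hxstar.2 z hz.1)
  rw [← same_value]
  refine le_trans (lintegral_mono fun ξ => ?_) (lintegral_dist_prox_sq_le hμ hF hT hint hz.1)
  gcongr
  · exact infDist_nonneg
  · exact infDist_le_dist_of_mem hz

theorem IsZeroMeanSubgradient.le_expectedEnvelope [CompleteSpace E] [IsFiniteMeasure P]
    {xstar : E} {g : Ω → E} (hg : IsZeroMeanSubgradient P D F xstar g) (hμ : 0 < μ)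
    (hxstar : Integrable (fun ξ => F ξ xstar) P) {x : E} (hT : ∀ ξ, T x ξ ∈ D ξ)
    (hint : Integrable (fun ξ => proxObjective (F ξ) μ x (T x ξ)) P) :
    ∫ ξ, F ξ xstar ∂P - μ / 2 * ∫ ξ, ‖g ξ‖ ^ 2 ∂P ≤ expectedEnvelope P F T μ x := by
  have g_integrable : Integrable g P := hg.memLp.integrable one_le_two
  have inner_integrable : Integrable (fun ξ => ⟪g ξ, x - xstar⟫) P :=
    g_integrable.inner_const _
  have sq_integrable : Integrable (fun ξ => μ / 2 * ‖g ξ‖ ^ 2) P :=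
    hg.memLp.norm.integrable_sq.const_mul _
  have integral_inner_eq_zero : ∫ ξ, ⟪g ξ, x - xstar⟫ ∂P = 0 := by
    simp only [real_inner_comm (x - xstar)]
    rw [integral_inner g_integrable, hg.integral_eq_zero, inner_zero_right]
  have linear_integrable : Integrable (fun ξ => F ξ xstar + ⟪g ξ, x - xstar⟫) P :=
    hxstar.add inner_integrable
  calc ∫ ξ, F ξ xstar ∂P - μ / 2 * ∫ ξ, ‖g ξ‖ ^ 2 ∂P
      = ∫ ξ, (F ξ xstar + ⟪g ξ, x - xstar⟫ - μ / 2 * ‖g ξ‖ ^ 2) ∂P := by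
        rw [integral_sub linear_integrable sq_integrable,
          integral_add hxstar inner_integrable, integral_const_mul, integral_inner_eq_zero,
          add_zero]
    _ ≤ expectedEnvelope P F T μ x :=
        integral_mono (linear_integrable.sub sq_integrable) hint fun ξ =>
          subgradient_bound_le_proxObjective hμ x (hg.add_inner_le ξ _ (hT ξ))

theorem lintegral_infDist_prox_sq_le_of_isWeaklyLinearlyRegular [CompleteSpace E]
    [IsProbabilityMeasure P] {xstar : E} {g : Ω → E} {σ β SF : ℝ} (hμ : 0 < μ)
    (hF : ∀ ξ, ConvexOn ℝ (D ξ) (F ξ))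
    (hT : ∀ x ξ, IsProxPoint (D ξ) (F ξ) μ x (T x ξ))
    (hint : ∀ x, Integrable (fun ξ => proxObjective (F ξ) μ x (T x ξ)) P)
    (hxstar : xstar ∈ expectedMinimizers P D F) (hg : IsZeroMeanSubgradient P D F xstar g)
    (hSF : ∫ ξ, ‖g ξ‖ ^ 2 ∂P ≤ SF)
    (hreg : IsWeaklyLinearlyRegular (expectedEnvelope P F T μ) (expectedMinimizers P D F) σ
      (μ * β)) (x : E) :
    ∫⁻ ξ, ENNReal.ofReal (infDist (T x ξ) (expectedMinimizers P D F) ^ 2) ∂P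
      ≤ ENNReal.ofReal ((1 - μ * σ) * infDist x (expectedMinimizers P D F) ^ 2
        + (SF + 2 * β) * μ ^ 2) := by
  obtain ⟨Fμstar, hglb, hreg⟩ := hreg
  have optimal_value_bound : ∫ ξ, F ξ xstar ∂P - μ / 2 * SF ≤ Fμstar := by
    refine (le_isGLB_iff hglb).2 (forall_mem_range.2 fun y => ?_)
    refine le_trans ?_ (hg.le_expectedEnvelope hμ hxstar.1.2 (fun ξ => (hT y ξ).1) (hint y))
    gcongr
  have gap_bound : ∫ ξ, F ξ xstar ∂P - expectedEnvelope P F T μ x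
      ≤ μ / 2 * SF + μ * β - σ / 2 * infDist x (expectedMinimizers P D F) ^ 2 := by
    linarith [hreg x]
  refine (lintegral_infDist_prox_sq_le hμ hF (hT x) (hint x) hxstar).trans
    (ENNReal.ofReal_le_ofReal ?_)
  linarith [mul_le_mul_of_nonneg_left gap_bound (by positivity : 0 ≤ 2 * μ)]

end Expectation

section RandomIteration

open scoped ENNReal NNReal

theorem lintegral_pi_le_lintegral_insertNth {k : ℕ} {α : Fin (k + 1) → Type*}
    [∀ i, MeasurableSpace (α i)] (ν : ∀ i, Measure (α i)) [∀ i, SigmaFinite (ν i)]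
    (i : Fin (k + 1)) (f : (∀ j, α j) → ℝ≥0∞) :
    ∫⁻ ω, f ω ∂Measure.pi ν
      ≤ ∫⁻ ω, ∫⁻ ξ, f (i.insertNth ξ ω) ∂ν i ∂Measure.pi fun j => ν (i.succAbove j) := by
  have hpres := (measurePreserving_piFinSuccAbove ν i).symm
  rw [← hpres.lintegral_comp_emb (MeasurableEquiv.measurableEmbedding _), ← lintegral_prod_swap]
  exact lintegral_prod_le _

variable {S Ω : Type*} [MeasurableSpace Ω] {P : Measure Ω} [IsProbabilityMeasure P]
  {T : ℕ → S → Ω → S} {x0 : S} {traj : (k : ℕ) → (Fin k → Ω) → S}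

theorem lintegral_random_iteration_le (htraj0 : ∀ ω, traj 0 ω = x0)
    (htrajS : ∀ k (ω : Fin (k + 1) → Ω),
      traj (k + 1) ω = T k (traj k fun i => ω i.castSucc) (ω (Fin.last k)))
    {V : S → ℝ≥0∞} {a b : ℕ → ℝ≥0∞} (ha : ∀ k, a k ≠ ∞)
    (hstep : ∀ k x, ∫⁻ ξ, V (T k x ξ) ∂P ≤ a k * V x + b k) (k : ℕ) :
    ∫⁻ ω, V (traj k ω) ∂(Measure.pi fun _ : Fin k => P)
      ≤ V x0 * ∏ i ∈ Finset.range k, a i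
        + ∑ i ∈ Finset.range k, b i * ∏ j ∈ Finset.Ico (i + 1) k, a j := by
  have recurrence : ∀ k, ∫⁻ ω, V (traj (k + 1) ω) ∂(Measure.pi fun _ : Fin (k + 1) => P)
      ≤ a k * ∫⁻ ω, V (traj k ω) ∂(Measure.pi fun _ : Fin k => P) + b k := by
    intro k
    calc ∫⁻ ω, V (traj (k + 1) ω) ∂(Measure.pi fun _ : Fin (k + 1) => P)
        ≤ ∫⁻ ω, ∫⁻ ξ, V (T k (traj k ω) ξ) ∂P ∂(Measure.pi fun _ : Fin k => P) := by
          simpa only [htrajS, Fin.insertNth_last', Fin.snoc_castSucc, Fin.snoc_last] using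
            lintegral_pi_le_lintegral_insertNth (fun _ : Fin (k + 1) => P) (Fin.last k)
              fun ω => V (traj (k + 1) ω)
      _ ≤ ∫⁻ ω, (a k * V (traj k ω) + b k) ∂(Measure.pi fun _ : Fin k => P) :=
          lintegral_mono fun ω => hstep k (traj k ω)
      _ = _ := by
          rw [lintegral_add_right _ measurable_const, lintegral_const_mul' _ _ (ha k),
            lintegral_const, measure_univ, mul_one]
  simpa [htraj0] using discrete_gronwall_prod_general
    (u := fun k => ∫⁻ ω, V (traj k ω) ∂(Measure.pi fun _ : Fin k => P)) (fun k _ => recurrence k)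
    (fun _ _ => zero_le) k.zero_le

theorem integral_random_iteration_le (htraj0 : ∀ ω, traj 0 ω = x0)
    (htrajS : ∀ k (ω : Fin (k + 1) → Ω),
      traj (k + 1) ω = T k (traj k fun i => ω i.castSucc) (ω (Fin.last k)))
    {V : S → ℝ} {a b : ℕ → ℝ} (hV : ∀ x, 0 ≤ V x) (ha : ∀ k, 0 ≤ a k) (hb : ∀ k, 0 ≤ b k)
    (hstep : ∀ k x, ∫⁻ ξ, ENNReal.ofReal (V (T k x ξ)) ∂P ≤ ENNReal.ofReal (a k * V x + b k))
    (k : ℕ) :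
    ∫ ω, V (traj k ω) ∂(Measure.pi fun _ : Fin k => P)
      ≤ V x0 * ∏ i ∈ Finset.range k, a i
        + ∑ i ∈ Finset.range k, b i * ∏ j ∈ Finset.Ico (i + 1) k, a j := by
  lift V to S → ℝ≥0 using hV
  lift a to ℕ → ℝ≥0 using ha
  lift b to ℕ → ℝ≥0 using hb
  have nnreal_step : ∀ k x, ∫⁻ ξ, (V (T k x ξ) : ℝ≥0∞) ∂P ≤ a k * V x + b k := fun k x => by
    simpa only [← NNReal.coe_mul, ← NNReal.coe_add, ENNReal.ofReal_coe_nnreal, ENNReal.coe_mul,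
      ENNReal.coe_add] using hstep k x
  have lintegral_bound := lintegral_random_iteration_le htraj0 htrajS
    (V := fun x => V x) (a := fun k => a k) (b := fun k => b k)
    (fun _ => ENNReal.coe_ne_top) nnreal_step k
  have integral_le_toReal := (le_abs_self _).trans
    (norm_integral_le_lintegral_norm (μ := Measure.pi fun _ : Fin k => P)
      fun ω => (V (traj k ω) : ℝ))
  simp only [NNReal.norm_eq, ENNReal.ofReal_coe_nnreal] at integral_le_toReal
  refine integral_le_toReal.trans ?_
  beta_reduce
  norm_cast
  exact ENNReal.toReal_le_coe_of_le_coe (by exact_mod_cast lintegral_bound)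

end RandomIteration

theorem spp_recurrence_bound_general {E Ω : Type*} [NormedAddCommGroup E] [InnerProductSpace ℝ E]
    [CompleteSpace E] [MeasurableSpace Ω] {P : Measure Ω} [IsProbabilityMeasure P]
    {D : Ω → Set E} {F : Ω → E → ℝ} (hF : ∀ ξ, ConvexOn ℝ (D ξ) (F ξ))
    {xstar : E} (hxstar : xstar ∈ expectedMinimizers P D F)
    {g : Ω → E} (hg : IsZeroMeanSubgradient P D F xstar g)
    {SF : ℝ} (hSF : ∫ ξ, ‖g ξ‖ ^ 2 ∂P ≤ SF)
    {μ : ℕ → ℝ} (hμ : ∀ k, 0 < μ k) {σ β : ℝ} (hβ : 0 ≤ β) (hμσ : ∀ k, μ k * σ ≤ 1)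
    {T : ℕ → E → Ω → E} (hT : ∀ k x ξ, IsProxPoint (D ξ) (F ξ) (μ k) x (T k x ξ))
    (hint : ∀ k x, Integrable (fun ξ => proxObjective (F ξ) (μ k) x (T k x ξ)) P)
    (hreg : ∀ k, IsWeaklyLinearlyRegular (expectedEnvelope P F (T k) (μ k))
      (expectedMinimizers P D F) σ (μ k * β))
    {x0 : E} {traj : (k : ℕ) → (Fin k → Ω) → E} (htraj0 : ∀ ω, traj 0 ω = x0)
    (htrajS : ∀ k (ω : Fin (k + 1) → Ω),
      traj (k + 1) ω = T k (traj k fun i => ω i.castSucc) (ω (Fin.last k))) (k : ℕ) :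
    ∫ ω, infDist (traj k ω) (expectedMinimizers P D F) ^ 2 ∂(Measure.pi fun _ : Fin k => P)
      ≤ (∏ i ∈ Finset.range k, (1 - μ i * σ)) * infDist x0 (expectedMinimizers P D F) ^ 2
        + (SF + 2 * β) * ∑ i ∈ Finset.range k,
            (∏ j ∈ Finset.Ico (i + 1) k, (1 - μ j * σ)) * μ i ^ 2 := by
  have hSF0 : 0 ≤ SF := (integral_nonneg fun ξ => sq_nonneg ‖g ξ‖).trans hSF
  have unrolled := integral_random_iteration_le htraj0 htrajS
    (V := fun x => infDist x (expectedMinimizers P D F) ^ 2)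
    (fun _ => sq_nonneg _) (fun k => sub_nonneg.2 (hμσ k))
    (fun k => (by positivity : 0 ≤ (SF + 2 * β) * μ k ^ 2))
    (fun k => lintegral_infDist_prox_sq_le_of_isWeaklyLinearlyRegular (hμ k) hF (hT k) (hint k)
      hxstar hg hSF (hreg k)) k
  refine unrolled.trans_eq ?_
  rw [mul_comm, Finset.mul_sum]
  congr 1
  exact Finset.sum_congr rfl fun i _ => by ring

theorem spp_recurrence_bound
    {n : ℕ} {Ω : Type} [MeasurableSpace Ω] (P : Measure Ω) [IsProbabilityMeasure P]
    -- the components F(·;ξ): proper convex lsc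
    (D : Ω → Set (EuclideanSpace ℝ (Fin n)))
    (F : Ω → EuclideanSpace ℝ (Fin n) → ℝ)
    (hDne : ∀ ξ, (D ξ).Nonempty)
    (hDconv : ∀ ξ, Convex ℝ (D ξ))
    (hFconv : ∀ ξ, ConvexOn ℝ (D ξ) (F ξ))
    (hFlsc : ∀ ξ, IsClosed {p : EuclideanSpace ℝ (Fin n) × ℝ | p.1 ∈ D ξ ∧ F ξ p.1 ≤ p.2})
    -- optimal set X* and optimal value F*
    (Xstar : Set (EuclideanSpace ℝ (Fin n))) (Fstar : ℝ)
    (hXstar : ∀ x, x ∈ Xstar ↔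
      ((∀ ξ, x ∈ D ξ) ∧ Integrable (fun ξ => F ξ x) P ∧ ∫ ξ, F ξ x ∂P = Fstar))
    (hFmin : ∀ x, (∀ ξ, x ∈ D ξ) → Integrable (fun ξ => F ξ x) P → Fstar ≤ ∫ ξ, F ξ x ∂P)
    -- zero-mean subgradient selection at an optimal point x*, second moment ≤ S*_F
    (xstar : EuclideanSpace ℝ (Fin n)) (hxstar : xstar ∈ Xstar)
    (g : Ω → EuclideanSpace ℝ (Fin n)) (SF : ℝ)
    (hg : ∀ ξ, ∀ y ∈ D ξ, F ξ xstar + ⟪g ξ, y - xstar⟫ ≤ F ξ y)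
    (hgint : Integrable g P)
    (hgmean : (∫ ξ, g ξ ∂P) = 0)
    (hg2int : Integrable (fun ξ => ‖g ξ‖ ^ 2) P)
    (hSF : (∫ ξ, ‖g ξ‖ ^ 2 ∂P) ≤ SF)
    -- proximal map z_μ(x;ξ), Moreau envelope integrability, F_μ*
    (prox : ℝ → EuclideanSpace ℝ (Fin n) → Ω → EuclideanSpace ℝ (Fin n))
    (hprox : ∀ μ, 0 < μ → ∀ x ξ, prox μ x ξ ∈ D ξ ∧ ∀ y ∈ D ξ,
      F ξ (prox μ x ξ) + ‖prox μ x ξ - x‖ ^ 2 / (2 * μ)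
        ≤ F ξ y + ‖y - x‖ ^ 2 / (2 * μ))
    (hFmuint : ∀ μ, 0 < μ → ∀ x, Integrable
      (fun ξ => F ξ (prox μ x ξ) + ‖prox μ x ξ - x‖ ^ 2 / (2 * μ)) P)
    (Fmustar : ℝ → ℝ)
    (hFmustar : ∀ μ, 0 < μ → IsGLB
      (Set.range fun x => ∫ ξ, (F ξ (prox μ x ξ) + ‖prox μ x ξ - x‖ ^ 2 / (2 * μ)) ∂P)
      (Fmustar μ))
    -- weak linear regularity with constants σ_{F,μ} (nonincreasing in μ) and β ≥ 0
    (σ : ℝ → ℝ) (β : ℝ)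
    (hσpos : ∀ μ, 0 < μ → 0 < σ μ)
    (hσmono : AntitoneOn σ (Set.Ioi (0 : ℝ)))
    (hβ : 0 ≤ β)
    (hWLR : ∀ μ, 0 < μ → ∀ x, σ μ / 2 * (infDist x Xstar) ^ 2
      ≤ (∫ ξ, (F ξ (prox μ x ξ) + ‖prox μ x ξ - x‖ ^ 2 / (2 * μ)) ∂P) - Fmustar μ + μ * β)
    -- stepsizes: positive, nonincreasing, μ_k σ_{F,μ_0} ≤ 1
    (μs : ℕ → ℝ)
    (hμpos : ∀ k, 0 < μs k)
    (hμmono : ∀ k, μs (k + 1) ≤ μs k)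
    (hμσ : ∀ k, μs k * σ (μs 0) ≤ 1)
    -- the SPP trajectory: x^k is a function of the first k i.i.d. samples
    (x0 : EuclideanSpace ℝ (Fin n))
    (traj : (k : ℕ) → (Fin k → Ω) → EuclideanSpace ℝ (Fin n))
    (htraj0 : ∀ ω, traj 0 ω = x0)
    (htrajS : ∀ k (ω : Fin (k + 1) → Ω),
      traj (k + 1) ω = prox (μs k) (traj k fun i => ω i.castSucc) (ω (Fin.last k))) :
    ∀ k : ℕ,
      (∫ ω, (infDist (traj (k + 1) ω) Xstar) ^ 2 ∂(Measure.pi fun _ : Fin (k + 1) => P))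
        ≤ (∏ i ∈ Finset.range (k + 1), (1 - μs i * σ (μs 0))) * (infDist x0 Xstar) ^ 2
          + (SF + 2 * β) * ∑ i ∈ Finset.range (k + 1),
              (∏ j ∈ Finset.Icc (i + 1) k, (1 - μs j * σ (μs 0))) * μs i ^ 2 := by
  obtain rfl := eq_expectedMinimizers ⟨xstar, hxstar⟩ hXstar hFmin
  have hg' : IsZeroMeanSubgradient P D F xstar g :=
    ⟨hg, (memLp_two_iff_integrable_sq_norm hgint.aestronglyMeasurable).2 hg2int, hgmean⟩
  have hreg (k : ℕ) : IsWeaklyLinearlyRegular (expectedEnvelope P F (prox (μs k)) (μs k))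
      (expectedMinimizers P D F) (σ (μs k)) (μs k * β) :=
    ⟨Fmustar (μs k), hFmustar _ (hμpos k), hWLR _ (hμpos k)⟩
  have hσ (k : ℕ) : σ (μs 0) ≤ σ (μs k) :=
    hσmono (hμpos k) (hμpos 0) (antitone_nat_of_succ_le hμmono k.zero_le)
  intro k
  simpa only [Finset.Ico_add_one_right_eq_Icc] using
    spp_recurrence_bound_general hFconv hxstar hg' hSF hμpos hβ hμσ
      (fun k => hprox _ (hμpos k)) (fun k => hFmuint _ (hμpos k)) (fun k => (hreg k).mono (hσ k))
      htraj0 htrajS (k + 1)
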